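/- Let d ∈ ℕ and let S_d be an order 2 digital (t,d)-sequence over 𝔽_2 whose generating matrices E_i = (e_{i,k,ℓ})_{k,ℓ≥1} satisfy e_{i,k,ℓ} = 0 for all k > 2ℓ and all i ∈ {1,…,d}. There is a constant C depending only on d such that for every N ≥ 2, every j ∈ ℕ_{−1}^d with |j| + t/2 ≥ log₂ N and every m ∈ 𝔻_j: (a) if the interval I_{j,m} contains a point of the first N points of S_d, then |⟨D_{S_d}^N, h_{j,m}⟩| ≤ C · 2^{t/2} · N^{−1} · 2^{−|j|}; (b) the number of m ∈ 𝔻_j for which I_{j,m} contains no point of the first N points of S_d is at least 2^{|j|} − N, and for every such m one has |⟨D_{S_d}^N, h_{j,m}⟩| ≤ C · 2^{−2|j|}. -/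

import Mathlib

open MeasureTheory
open scoped ENNReal

noncomputable section

/-- The closed unit cube `[0,1]^d`. -/
def unitCube (d : ℕ) : Set (Fin d → ℝ) := Set.univ.pi fun _ => Set.Icc (0:ℝ) 1

/-- The half-open unit cube `[0,1)^d`. -/
def unitCubeIco (d : ℕ) : Set (Fin d → ℝ) := Set.univ.pi fun _ => Set.Ico (0:ℝ) 1

/-- Discrepancy function of the first `N` points of the sequence `S` in `[0,1)^d`. -/
def discSeq (d : ℕ) (S : ℕ → Fin d → ℝ) (N : ℕ) (x : Fin d → ℝ) : ℝ :=
  (Nat.card {k : Fin N // ∀ i, S k i < x i} : ℝ) / N - ∏ i, x i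

/-- One-dimensional Haar function `h_{j,m}`, with `h_{-1,0} = 1_{[0,1)}`. -/
def haar1 (j : ℤ) (m : ℕ) (x : ℝ) : ℝ :=
  if j = -1 then (if 0 ≤ x ∧ x < 1 then 1 else 0)
  else if (m:ℝ)/2^j.toNat ≤ x ∧ x < ((m:ℝ) + 1/2)/2^j.toNat then 1
  else if ((m:ℝ) + 1/2)/2^j.toNat ≤ x ∧ x < ((m:ℝ)+1)/2^j.toNat then -1
  else 0

/-- `d`-dimensional (tensor product) Haar function. -/
def haarFn (d : ℕ) (j : Fin d → ℤ) (m : Fin d → ℕ) (x : Fin d → ℝ) : ℝ :=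
  ∏ i, haar1 (j i) (m i) (x i)

/-- Haar coefficient `⟨f, h_{j,m}⟩`. -/
def haarCoeff (d : ℕ) (f : (Fin d → ℝ) → ℝ) (j : Fin d → ℤ) (m : Fin d → ℕ) : ℝ :=
  ∫ x in unitCube d, f x * haarFn d j m x

/-- `|j| = max(j₁,0) + ⋯ + max(j_d,0)`. -/
def jnorm (d : ℕ) (j : Fin d → ℤ) : ℕ := ∑ i, (j i).toNat

/-- One-dimensional dyadic interval `I_{j,m}`. -/
def dyadicI (j : ℤ) (m : ℕ) : Set ℝ :=
  Set.Ico ((m:ℝ)/2^j.toNat) (((m:ℝ)+1)/2^j.toNat)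

/-- `d`-dimensional dyadic box `I_{j,m}`. -/
def dyadicBox (d : ℕ) (j : Fin d → ℤ) (m : Fin d → ℕ) : Set (Fin d → ℝ) :=
  Set.univ.pi fun i => dyadicI (j i) (m i)

/-- The index set `𝔻_j` as a finset. -/
def Dfin (d : ℕ) (j : Fin d → ℤ) : Finset (Fin d → ℕ) :=
  Fintype.piFinset fun i => Finset.range (2 ^ (j i).toNat)

/-- The index set `𝔻_j` for `j ∈ ℕ₀^d`. -/
def Dfin0 (d : ℕ) (j : Fin d → ℕ) : Finset (Fin d → ℕ) :=
  Fintype.piFinset fun i => Finset.range (2 ^ (j i))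

/-- Coordinate of the `k`-th point of a digital sequence over `𝔽₂` with generating
matrix `C` (`0`-based rows and columns). -/
def digitalCoord (C : ℕ → ℕ → ZMod 2) (k : ℕ) : ℝ :=
  ∑' i : ℕ,
    (((∑ ℓ ∈ Finset.range (k+1), C i ℓ * (if k.testBit ℓ then 1 else 0)).val : ℕ) : ℝ) / 2 ^ (i + 1)

/-- The digital sequence over `𝔽₂` generated by matrices `C 0, …, C (d-1)`. -/
def digitalSeq (d : ℕ) (C : Fin d → ℕ → ℕ → ZMod 2) : ℕ → Fin d → ℝ :=
  fun k j => digitalCoord (C j) k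

/-- `C 0, …, C (d-1)` generate an order `α` digital `(t,n,d)`-net over `𝔽₂`,
where the relevant submatrices have `q` rows (`q ≥ αn`) and `n` columns.
Row indices are `0`-based; the `1`-based row value of row `r` is `r+1`. -/
def IsOrderNet (α n t q d : ℕ) (C : Fin d → ℕ → ℕ → ZMod 2) : Prop :=
  ∀ (ν : Fin d → ℕ) (r : ∀ j : Fin d, Fin (ν j) → ℕ),
    (∀ j, StrictAnti (r j)) →
    (∀ j l, r j l < q) →
    (∑ j, ∑ l ∈ Finset.univ.filter (fun l : Fin (ν j) => (l:ℕ) < α), (r j l + 1)) ≤ α * n - t →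
    LinearIndependent (ZMod 2)
      (fun p : Σ j : Fin d, Fin (ν j) => fun col : Fin n => C p.1 (r p.1 p.2) col)

/-- `C 0, …, C (d-1)` generate an order `α` digital `(t,d)`-sequence over `𝔽₂`. -/
def IsOrderSeq (α t d : ℕ) (C : Fin d → ℕ → ℕ → ZMod 2) : Prop :=
  ∀ n : ℕ, t < α * n → IsOrderNet α n t (α * n) d C

/-- The condition `e_{i,k,ℓ} = 0` for all `k > 2ℓ` (in `1`-based indexing). -/
def Triangular2 (d : ℕ) (E : Fin d → ℕ → ℕ → ZMod 2) : Prop :=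
  ∀ i k ℓ, 2 * (ℓ + 1) < k + 1 → E i k ℓ = 0

open scoped Classical in
/-- The quantity `λ(U)⁻¹ ∑_{j ∈ ℕ₀^d} 2^{|j|} ∑_{m : I_{j,m} ⊆ U} ⟨f,h_{j,m}⟩²`. -/
def bmoSq (d : ℕ) (f : (Fin d → ℝ) → ℝ) (U : Set (Fin d → ℝ)) : ℝ≥0∞ :=
  (volume U)⁻¹ * ∑' j : Fin d → ℕ, ∑ m ∈ Dfin0 d j,
    if dyadicBox d (fun i => (j i : ℤ)) m ⊆ U then
      (2:ℝ≥0∞) ^ (∑ i, j i) * ENNReal.ofReal ((haarCoeff d f (fun i => (j i : ℤ)) m)^2)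
    else 0

/-- The BMO (semi-)norm `‖f | bmo^d‖`. -/
def bmoNorm (d : ℕ) (f : (Fin d → ℝ) → ℝ) : ℝ≥0∞ :=
  (⨆ U : {U : Set (Fin d → ℝ) // MeasurableSet U ∧ U ⊆ unitCubeIco d ∧ 0 < volume U},
    bmoSq d f U.1) ^ (1/2 : ℝ)

/-- The Orlicz norm of `f` on `[0,1)^d` with respect to the Young function `ψ`,
with the convention `inf ∅ = ∞`. -/
def orliczNorm (d : ℕ) (ψ : ℝ → ℝ) (f : (Fin d → ℝ) → ℝ) : ℝ≥0∞ :=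
  ⨅ K : {K : ℝ // 0 < K ∧ ∫ x in unitCubeIco d, ψ (|f x| / K) ≤ 1}, ENNReal.ofReal K.1

/-- `ψ` is a Young function which coincides with `exp(x^β) - 1` for all large `x`. -/
def IsYoungExp (β : ℝ) (ψ : ℝ → ℝ) : Prop :=
  ConvexOn ℝ (Set.Ici 0) ψ ∧ ψ 0 = 0 ∧ (∀ x : ℝ, 0 < x → 0 < ψ x) ∧
    ∃ x₀ : ℝ, ∀ x ≥ x₀, ψ x = Real.exp (x ^ β) - 1

/-- The set of valid Haar indices `j ∈ ℕ_{-1}^d`. -/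
def validJ (d : ℕ) : Set (Fin d → ℤ) := {j | ∀ i, -1 ≤ j i}

/-- The `q`-th power of the Haar-characterization of the `S^s_{p,q}B` norm:
`∑_{j ∈ ℕ_{-1}^d} 2^{|j|(s-1/p+1)q} (∑_{m ∈ 𝔻_j} |⟨f,h_{j,m}⟩|^p)^{q/p}`. -/
def besovSum (d : ℕ) (p q s : ℝ) (f : (Fin d → ℝ) → ℝ) : ℝ≥0∞ :=
  ∑' j : validJ d,
    ENNReal.ofReal ((2:ℝ) ^ ((jnorm d j.1 : ℝ) * (s - 1/p + 1) * q) *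
      (∑ m ∈ Dfin d j.1, |haarCoeff d f j.1 m| ^ p) ^ (q / p))

/-- Coordinate of the `k`-th point of a digital net with `q × n` generating matrix `C`. -/
def netCoord (q n : ℕ) (C : ℕ → ℕ → ZMod 2) (k : ℕ) : ℝ :=
  ∑ i ∈ Finset.range q,
    ((∑ ℓ ∈ Finset.range n, C i ℓ * (if k.testBit ℓ then 1 else 0)).val : ℝ) / 2 ^ (i + 1)

/-- `n_{μ+1}`, with the convention `n_{r+1} = log₂ N` (indices `1`-based, `n` stored `0`-based). -/
def nExt (r : ℕ) (n : Fin r → ℕ) (N : ℕ) (μ : ℕ) : ℝ :=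
  if h : μ < r then (n ⟨μ, h⟩ : ℝ) else Real.logb 2 N

/-- `n_μ`, with the convention `n_0 = 0` (indices `1`-based, `n` stored `0`-based). -/
def nPrev (r : ℕ) (n : Fin r → ℕ) (μ : ℕ) : ℝ :=
  if h : 1 ≤ μ ∧ μ ≤ r then (n ⟨μ - 1, by omega⟩ : ℝ) else 0

/-- The dyadic square function `Sf`, valued in `ℝ≥0∞`. -/
def sqFnE (d : ℕ) (f : (Fin d → ℝ) → ℝ) (x : Fin d → ℝ) : ℝ≥0∞ :=
  (∑' j : validJ d, ∑ m ∈ Dfin d j.1,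
    ENNReal.ofReal ((2:ℝ) ^ (2 * jnorm d j.1) * (haarCoeff d f j.1 m)^2 *
      (dyadicBox d j.1 m).indicator (fun _ => (1:ℝ)) x)) ^ (1/2 : ℝ)

/-- `sup_{p > 1} p^{-1/β} ‖f‖_{L_p([0,1]^d)}`. -/
def supLp (d : ℕ) (β : ℝ) (f : (Fin d → ℝ) → ℝ) : ℝ≥0∞ :=
  ⨆ p : {p : ℝ // 1 < p},
    ENNReal.ofReal ((p:ℝ) ^ (-(1/β))) * eLpNorm f (ENNReal.ofReal (p:ℝ)) (volume.restrict (unitCube d))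

/-- `‖f | 𝒟₀^d‖² = ∑_{j ∈ ℕ₀^d} 2^{|j|} ∑_{m ∈ 𝔻_j} ⟨f,h_{j,m}⟩²`. -/
def dNormSq (d : ℕ) (f : (Fin d → ℝ) → ℝ) : ℝ≥0∞ :=
  ∑' j : Fin d → ℕ, ∑ m ∈ Dfin0 d j,
    ENNReal.ofReal ((2:ℝ) ^ (∑ i, j i) * (haarCoeff d f (fun i => (j i : ℤ)) m)^2)

/-- `‖f | 𝒟₀^d‖`. -/
def dNorm (d : ℕ) (f : (Fin d → ℝ) → ℝ) : ℝ≥0∞ := (dNormSq d f) ^ (1/2 : ℝ)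
section helpers

lemma card_fiber_le {ι : Type} [Fintype ι] (n : ℕ) (A : ι → Fin n → ZMod 2)
    (hA : LinearIndependent (ZMod 2) A) (s : Finset (Fin n → ZMod 2))
    (hs : ∀ u ∈ s, ∀ v ∈ s, ∀ p, ∑ c, A p c * u c = ∑ c, A p c * v c) :
    s.card ≤ 2 ^ (n - Fintype.card ι) := by
  classical
  rcases s.eq_empty_or_nonempty with rfl | ⟨u0, hu0⟩
  · simp
  let M : Matrix ι (Fin n) (ZMod 2) := Matrix.of A
  have hr : M.rank = Fintype.card ι := LinearIndependent.rank_matrix (M := M) hA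
  have hk := LinearMap.finrank_range_add_finrank_ker M.mulVecLin
  have hr' : Module.finrank (ZMod 2) (LinearMap.range M.mulVecLin) = Fintype.card ι := hr
  rw [hr', Module.finrank_fin_fun] at hk
  have hc : Nat.card (LinearMap.ker M.mulVecLin) = 2 ^ (n - Fintype.card ι) := by
    rw [Module.natCard_eq_pow_finrank (K := ZMod 2)]
    simp only [Nat.card_eq_fintype_card, ZMod.card]
    congr 1; omega
  rw [← hc, ← Fintype.card_coe s, ← Nat.card_eq_fintype_card]
  refine Nat.card_le_card_of_injective
    (fun u : s => (⟨u.1 - u0, ?_⟩ : LinearMap.ker M.mulVecLin)) ?_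
  · rw [LinearMap.mem_ker, map_sub, sub_eq_zero]
    funext p
    exact hs u.1 u.2 u0 hu0 p
  · intro u v h
    have h' := congrArg Subtype.val h
    exact Subtype.ext (sub_left_injective h')

lemma bits_sum (c : ℕ → ZMod 2) (k a b : ℕ) (ha : k < 2 ^ a) (hb : k < 2 ^ b) :
    ∑ ℓ ∈ Finset.range a, c ℓ * (if k.testBit ℓ then 1 else 0) =
    ∑ ℓ ∈ Finset.range b, c ℓ * (if k.testBit ℓ then 1 else 0) := by
  wlog h : a ≤ b generalizing a b
  · exact (this b a hb ha (by omega)).symm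
  apply Finset.sum_subset
  · intro x; simp; omega
  · intro x _ hx
    have : k < 2 ^ x := lt_of_lt_of_le ha (Nat.pow_le_pow_right (by norm_num) (by simpa using hx))
    simp [Nat.testBit_lt_two_pow this]

def binT (f : ℕ → ℕ) : ℝ := ∑' i, (f i : ℝ) / 2 ^ (i + 1)

def okDig (f : ℕ → ℕ) : Prop := (∀ i, f i < 2) ∧ ∃ q, ∀ i, q ≤ i → f i = 0

lemma binT_eq (f : ℕ → ℕ) (q : ℕ) (h : ∀ i, q ≤ i → f i = 0) :
    binT f = ∑ i ∈ Finset.range q, (f i : ℝ) / 2 ^ (i + 1) := by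
  apply tsum_eq_sum
  intro i hi
  simp [h i (by simpa using hi)]

lemma binT_nonneg (f : ℕ → ℕ) : 0 ≤ binT f := tsum_nonneg fun i => by positivity

lemma binT_lt_one (f : ℕ → ℕ) (h : okDig f) : binT f < 1 := by
  obtain ⟨h1, q, hq⟩ := h
  rw [binT_eq f q hq]
  have : ∀ q : ℕ, ∑ i ∈ Finset.range q, (f i : ℝ) / 2 ^ (i + 1) ≤ 1 - 1 / 2 ^ q := by
    intro q
    induction q with
    | zero => simp
    | succ q ih =>
      rw [Finset.sum_range_succ]
      have h2 : (f q : ℝ) ≤ 1 := by exact_mod_cast Nat.lt_succ_iff.mp (h1 q)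
      have h3 : (f q : ℝ) / 2 ^ (q+1) ≤ 1 / 2 ^ (q+1) := by gcongr
      have h4 : (1:ℝ) / 2 ^ q = 2 * (1 / 2 ^ (q+1)) := by field_simp; ring
      linarith
  have h5 : (0:ℝ) < 1 / 2 ^ q := by positivity
  linarith [this q]

lemma binT_succ (f : ℕ → ℕ) (h : okDig f) :
    2 * binT f = f 0 + binT (fun i => f (i + 1)) := by
  obtain ⟨h1, q, hq⟩ := h
  rw [binT_eq f (q+1) (fun i hi => hq i (by omega)),
    binT_eq (fun i => f (i+1)) q (fun i hi => hq (i+1) (by omega)), Finset.sum_range_succ',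
    mul_add, Finset.mul_sum, add_comm]
  congr 1
  · simp; ring
  · apply Finset.sum_congr rfl
    intro i _
    rw [pow_succ (2:ℝ) (i+1)]
    field_simp

lemma okDig_succ (f : ℕ → ℕ) (h : okDig f) : okDig (fun i => f (i + 1)) :=
  ⟨fun i => h.1 _, h.2.imp fun q hq i hi => hq _ (by omega)⟩

lemma digit_eq (j : ℕ) : ∀ (f : ℕ → ℕ) (m : ℕ), okDig f →
    (m : ℝ) ≤ binT f * 2 ^ j → binT f * 2 ^ j < m + 1 → ∀ i < j, f i = (m / 2 ^ (j - 1 - i)) % 2 := by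
  induction j with
  | zero => intro f m _ _ _ i hi; omega
  | succ j ih =>
    intro f m hf h1 h2 i hi
    have hs := binT_succ f hf
    have h0 := binT_nonneg (fun i => f (i+1))
    have h3 := binT_lt_one _ (okDig_succ f hf)
    have hp : (0:ℝ) < 2 ^ j := by positivity
    have h4 : binT f * 2 ^ (j+1) = f 0 * 2 ^ j + binT (fun i => f (i+1)) * 2 ^ j := by
      rw [← add_mul, ← hs]; ring
    rw [h4] at h1 h2
    have h5 : binT (fun i => f (i+1)) * 2 ^ j < 2 ^ j := by nlinarith
    have h6 : 0 ≤ binT (fun i => f (i+1)) * 2 ^ j := by positivity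
    have a1 : m < (f 0 + 1) * 2 ^ j := by
      have : (m:ℝ) < (f 0 + 1) * 2 ^ j := by linarith
      exact_mod_cast this
    have a2 : f 0 * 2 ^ j ≤ m := by
      have : (f 0 : ℝ) * 2 ^ j < m + 1 := by linarith
      have : f 0 * 2 ^ j < m + 1 := by exact_mod_cast this
      omega
    obtain ⟨m', rfl⟩ := Nat.exists_eq_add_of_le a2
    have a3 : m' < 2 ^ j := by rw [add_mul] at a1; omega
    push_cast at h1 h2
    cases i with
    | zero =>
      have : (f 0 * 2 ^ j + m') / 2 ^ j = f 0 := by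
        rw [add_comm, Nat.add_mul_div_right _ _ (by positivity), Nat.div_eq_of_lt a3, zero_add]
      simp only [Nat.add_sub_cancel, Nat.sub_zero, this]
      exact (Nat.mod_eq_of_lt (hf.1 0)).symm
    | succ i =>
      have := ih (fun i => f (i+1)) m' (okDig_succ f hf) (by linarith) (by linarith) i (by omega)
      rw [this]
      have e : j + 1 - 1 - (i+1) = j - 1 - i := by omega
      rw [e]
      have e2 : f 0 * 2 ^ j + m' = m' + 2 ^ (j - 1 - i) * (2 * (f 0 * 2 ^ i)) := by
        have : 2 ^ j = 2 ^ (j-1-i) * 2 * 2 ^ i := by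
          rw [← pow_succ, ← pow_add]; congr 1; omega
        rw [this]; ring
      rw [e2, Nat.add_mul_div_left _ _ (by positivity)]
      omega

def dig (C : ℕ → ℕ → ZMod 2) (k i : ℕ) : ℕ :=
  (∑ ℓ ∈ Finset.range (k+1), C i ℓ * (if k.testBit ℓ then 1 else 0)).val

lemma digitalCoord_eq (C : ℕ → ℕ → ZMod 2) (k : ℕ) : digitalCoord C k = binT (dig C k) := rfl

lemma okDig_dig (C : ℕ → ℕ → ZMod 2) (hC : ∀ k ℓ, 2 * (ℓ + 1) < k + 1 → C k ℓ = 0) (k : ℕ) :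
    okDig (dig C k) := by
  refine ⟨fun i => ZMod.val_lt _, 2 * (k+1), fun i hi => ?_⟩
  unfold dig
  rw [Finset.sum_eq_zero]
  · rfl
  · intro ℓ hℓ
    rw [hC i ℓ (by have := Finset.mem_range.mp hℓ; omega), zero_mul]

lemma mem_dyadicI {j : ℤ} {m : ℕ} {z : ℝ} : z ∈ dyadicI j m ↔
    (m:ℝ) ≤ z * 2 ^ j.toNat ∧ z * 2 ^ j.toNat < m + 1 := by
  unfold dyadicI
  rw [Set.mem_Ico, div_le_iff₀ (by positivity), lt_div_iff₀ (by positivity)]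

lemma count_box (d t : ℕ) (E : Fin d → ℕ → ℕ → ZMod 2) (hE : IsOrderSeq 2 t d E)
    (hT : Triangular2 d E) (j : Fin d → ℤ) (m : Fin d → ℕ) (s : Finset ℕ)
    (hs : ∀ k ∈ s, k < 2 ^ (jnorm d j + t / 2 + 1) ∧ digitalSeq d E k ∈ dyadicBox d j m) :
    s.card ≤ 2 ^ (t / 2 + 1) := by
  classical
  set n := jnorm d j + t / 2 + 1 with hn
  have hli := hE n (by omega) (fun i => (j i).toNat) (fun i l => (j i).toNat - 1 - l)
    (by intro i a b hab; have := a.2; have := b.2; have : (a:ℕ) < b := hab; simp only; omega)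
    (by
      intro i l
      have : (j i).toNat ≤ jnorm d j :=
        Finset.single_le_sum (f := fun i => (j i).toNat) (fun _ _ => Nat.zero_le _) (Finset.mem_univ i)
      omega)
    (by
      have : ∀ i : Fin d, ∑ l ∈ Finset.univ.filter (fun l : Fin ((j i).toNat) => (l:ℕ) < 2),
          ((j i).toNat - 1 - l + 1) ≤ 2 * (j i).toNat := by
        intro i
        refine (Finset.sum_le_card_nsmul _ _ (j i).toNat ?_).trans ?_
        · intro l _; have := l.2; omega
        · rw [smul_eq_mul]
          gcongr
          have : (Finset.univ.filter (fun l : Fin ((j i).toNat) => (l:ℕ) < 2)).card ≤ (Finset.range 2).card := by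
            apply Finset.card_le_card_of_injOn (fun l : Fin ((j i).toNat) => (l:ℕ))
            · intro l hl; simpa using hl
            · intro a _ b _ h; exact Fin.ext h
          simpa using this
      refine (Finset.sum_le_sum fun i _ => this i).trans ?_
      rw [← Finset.mul_sum]
      change 2 * jnorm d j ≤ _
      omega)
  let b : ℕ → Fin n → ZMod 2 := fun k c => if k.testBit c then 1 else 0
  have hinj : Set.InjOn b s := by
    intro k hk k' hk' h
    apply Nat.eq_of_testBit_eq
    intro i
    by_cases hi : i < n
    · have := congrFun h ⟨i, hi⟩
      simp only [b] at this
      cases h1 : k.testBit i <;> cases h2 : k'.testBit i <;> simp_all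
    · have hle : 2 ^ n ≤ 2 ^ i := Nat.pow_le_pow_right (by norm_num) (by omega)
      rw [Nat.testBit_lt_two_pow ((hs k hk).1.trans_le hle),
        Nat.testBit_lt_two_pow ((hs k' hk').1.trans_le hle)]
  have key : ∀ k ∈ s, ∀ p : (Σ i : Fin d, Fin ((j i).toNat)),
      (∑ c : Fin n, E p.1 ((j p.1).toNat - 1 - p.2) c * b k c).val = (m p.1 / 2 ^ (p.2:ℕ)) % 2 := by
    rintro k hk ⟨i, l⟩
    have h1 := (hs k hk).2 i (Set.mem_univ _)
    rw [mem_dyadicI] at h1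
    have hl := l.2
    have h2 := digit_eq (j i).toNat (dig (E i) k) (m i) (okDig_dig _ (hT i) k) h1.1 h1.2
      ((j i).toNat - 1 - l) (by omega)
    have e : (j i).toNat - 1 - ((j i).toNat - 1 - l) = l := by omega
    rw [e] at h2
    rw [← h2]
    unfold dig
    rw [bits_sum _ k (k+1) n (by have := @Nat.lt_two_pow_self k; rw [pow_succ]; omega) (hs k hk).1,
      Finset.sum_range]
  have := card_fiber_le n _ hli (s.image b) (by
    intro u hu v hv p
    rw [Finset.mem_image] at hu hv
    obtain ⟨k, hk, rfl⟩ := hu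
    obtain ⟨k', hk', rfl⟩ := hv
    apply ZMod.val_injective
    exact (key k hk p).trans (key k' hk' p).symm)
  rw [Finset.card_image_of_injOn hinj] at this
  have hc : Fintype.card (Σ i : Fin d, Fin ((j i).toNat)) = jnorm d j := by
    simp [jnorm]
  rw [hc] at this
  convert this using 2
  omega

end helpers

section analysis

lemma haar1_eq (j : ℤ) (hj : j ≠ -1) (m : ℕ) (x : ℝ) : haar1 j m x =
    (Set.Ico ((m:ℝ)/2^j.toNat) (((m:ℝ) + 1/2)/2^j.toNat)).indicator (fun _ => (1:ℝ)) x -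
    (Set.Ico (((m:ℝ) + 1/2)/2^j.toNat) (((m:ℝ) + 1)/2^j.toNat)).indicator (fun _ => (1:ℝ)) x := by
  unfold haar1
  simp only [hj, if_false, Set.indicator_apply, Set.mem_Ico]
  split_ifs <;> first | (norm_num; done) | (exfalso; grind)

lemma haar1_neg (m : ℕ) (x : ℝ) : haar1 (-1) m x =
    (Set.Ico (0:ℝ) 1).indicator (fun _ => (1:ℝ)) x := by
  simp [haar1, Set.indicator_apply, Set.mem_Ico]

lemma haar1_meas (j : ℤ) (m : ℕ) : Measurable (haar1 j m) := by
  by_cases hj : j = -1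
  · subst hj
    rw [show haar1 (-1) m = _ from funext (haar1_neg m)]
    exact measurable_const.indicator measurableSet_Ico
  · rw [show haar1 j m = _ from funext (haar1_eq j hj m)]
    exact (measurable_const.indicator measurableSet_Ico).sub
      (measurable_const.indicator measurableSet_Ico)

lemma haar1_abs_le (j : ℤ) (m : ℕ) (hm : m < 2 ^ j.toNat) (x : ℝ) :
    |haar1 j m x| ≤ (dyadicI j m).indicator (fun _ => (1:ℝ)) x := by
  by_cases hj : j = -1
  · subst hj
    have : m = 0 := by simpa using hm
    subst this
    rw [haar1_neg]
    simp [dyadicI, Set.indicator_apply]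
    split_ifs <;> simp
  · have hp : (0:ℝ) < 2 ^ j.toNat := by positivity
    have h1 : (m:ℝ)/2^j.toNat ≤ ((m:ℝ)+1/2)/2^j.toNat := by gcongr; linarith
    have h2 : ((m:ℝ)+1/2)/2^j.toNat ≤ ((m:ℝ)+1)/2^j.toNat := by gcongr; norm_num
    rw [haar1_eq j hj]
    simp only [dyadicI, Set.indicator_apply, Set.mem_Ico]
    split_ifs <;> first | (norm_num; done) | (exfalso; grind)

lemma haar1_abs_le_one (j : ℤ) (m : ℕ) (hm : m < 2 ^ j.toNat) (x : ℝ) : |haar1 j m x| ≤ 1 := by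
  refine (haar1_abs_le j m hm x).trans ?_
  exact Set.indicator_le_self' (fun _ _ => zero_le_one) x

lemma dyadicI_subset (j : ℤ) (m : ℕ) (hm : m < 2 ^ j.toNat) : dyadicI j m ⊆ Set.Icc 0 1 := by
  intro x hx
  rw [mem_dyadicI] at hx
  have hp : (0:ℝ) < 2 ^ j.toNat := by positivity
  have h1 : (m:ℝ) + 1 ≤ 2 ^ j.toNat := by exact_mod_cast hm
  have h0 : (0:ℝ) ≤ m := by positivity
  constructor
  · by_contra h; nlinarith
  · by_contra h; nlinarith

/-- bound of an integral against a Haar function -/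
lemma int_bound (j : ℤ) (m : ℕ) (hm : m < 2 ^ j.toNat) (g : ℝ → ℝ)
    (hg1 : ∀ x ∈ Set.Icc (0:ℝ) 1, |g x| ≤ 1) :
    |∫ x in Set.Icc (0:ℝ) 1, g x * haar1 j m x| ≤ 1 / 2 ^ j.toNat := by
  rw [← Real.norm_eq_abs]
  refine (norm_integral_le_of_norm_le (g := (dyadicI j m).indicator (fun _ => (1:ℝ))) ?_ ?_).trans ?_
  · exact (integrable_const (1:ℝ)).indicator measurableSet_Ico
  · rw [ae_restrict_iff' measurableSet_Icc]
    refine Filter.Eventually.of_forall fun x hx => ?_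
    rw [Real.norm_eq_abs, abs_mul]
    have := haar1_abs_le j m hm x
    have := hg1 x hx
    nlinarith [abs_nonneg (g x), abs_nonneg (haar1 j m x)]
  · have hms : MeasurableSet (dyadicI j m) := measurableSet_Ico
    rw [integral_indicator hms, Measure.restrict_restrict hms,
      Set.inter_eq_left.mpr (dyadicI_subset j m hm)]
    simp [dyadicI]
    apply le_of_eq; ring

lemma int_split (j : ℤ) (hj : j ≠ -1) (m : ℕ) (hm : m < 2 ^ j.toNat) (g : ℝ → ℝ)
    (hg : IntegrableOn g (Set.Icc 0 1)) :
    ∫ x in Set.Icc (0:ℝ) 1, g x * haar1 j m x =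
      (∫ x in (m:ℝ)/2^j.toNat..((m:ℝ) + 1/2)/2^j.toNat, g x) -
      ∫ x in ((m:ℝ) + 1/2)/2^j.toNat..((m:ℝ) + 1)/2^j.toNat, g x := by
  have hp : (0:ℝ) < 2 ^ j.toNat := by positivity
  have h1 : (m:ℝ)/2^j.toNat ≤ ((m:ℝ)+1/2)/2^j.toNat := by gcongr; linarith
  have h2 : ((m:ℝ)+1/2)/2^j.toNat ≤ ((m:ℝ)+1)/2^j.toNat := by gcongr; norm_num
  have hsub := dyadicI_subset j m hm
  have s1 : Set.Ico ((m:ℝ)/2^j.toNat) (((m:ℝ) + 1/2)/2^j.toNat) ⊆ Set.Icc 0 1 :=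
    (Set.Ico_subset_Ico_right h2).trans hsub
  have s2 : Set.Ico (((m:ℝ) + 1/2)/2^j.toNat) (((m:ℝ) + 1)/2^j.toNat) ⊆ Set.Icc 0 1 :=
    (Set.Ico_subset_Ico_left h1).trans hsub
  have e : ∀ x, g x * haar1 j m x =
      (Set.Ico ((m:ℝ)/2^j.toNat) (((m:ℝ) + 1/2)/2^j.toNat)).indicator g x -
      (Set.Ico (((m:ℝ) + 1/2)/2^j.toNat) (((m:ℝ) + 1)/2^j.toNat)).indicator g x := by
    intro x
    rw [haar1_eq j hj]
    simp only [Set.indicator_apply]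
    split_ifs <;> ring
  simp_rw [e]
  rw [integral_sub (hg.indicator measurableSet_Ico) (hg.indicator measurableSet_Ico),
    integral_indicator measurableSet_Ico, integral_indicator measurableSet_Ico,
    Measure.restrict_restrict measurableSet_Ico, Measure.restrict_restrict measurableSet_Ico,
    Set.inter_eq_left.mpr s1, Set.inter_eq_left.mpr s2,
    intervalIntegral.integral_of_le h1, intervalIntegral.integral_of_le h2,
    integral_Ico_eq_integral_Ioc, integral_Ico_eq_integral_Ioc]

lemma int_id (j : ℤ) (m : ℕ) (hm : m < 2 ^ j.toNat) :
    |∫ x in Set.Icc (0:ℝ) 1, x * haar1 j m x| ≤ 1 / 2 ^ (2 * j.toNat) := by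
  by_cases hj : j = -1
  · subst hj
    refine (int_bound (-1) m hm (fun x => x) ?_).trans ?_
    · intro x hx; rw [abs_of_nonneg hx.1]; exact hx.2
    · simp
  · rw [int_split j hj m hm (fun x => x) (continuous_id.integrableOn_Icc), integral_id, integral_id]
    have : (((m:ℝ) + 1/2)/2^j.toNat) ^ 2 - ((m:ℝ)/2^j.toNat) ^ 2 = 
      ((m:ℝ) + 1/4) / 2 ^ (2 * j.toNat) := by
      rw [pow_mul']; field_simp; ring
    have h' : (((m:ℝ) + 1)/2^j.toNat) ^ 2 - (((m:ℝ)+1/2)/2^j.toNat) ^ 2 = 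
      ((m:ℝ) + 3/4) / 2 ^ (2 * j.toNat) := by
      rw [pow_mul']; field_simp; ring
    rw [this, h']
    have e : ((m:ℝ) + 1/4) / 2 ^ (2 * j.toNat) / 2 - ((m:ℝ) + 3/4) / 2 ^ (2 * j.toNat) / 2 =
      - ((1/4) * (1 / 2 ^ (2 * j.toNat))) := by ring
    rw [e, abs_neg, abs_of_nonneg (by positivity)]
    have : (0:ℝ) < 1 / 2 ^ (2 * j.toNat) := by positivity
    linarith

lemma ind_integrable (z : ℝ) :
    IntegrableOn (fun x => if z < x then (1:ℝ) else 0) (Set.Icc 0 1) := by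
  have : (fun x => if z < x then (1:ℝ) else 0) = (Set.Ioi z).indicator (fun _ => (1:ℝ)) := by
    funext x; simp [Set.indicator_apply]
  rw [this]
  exact (integrable_const (1:ℝ)).indicator measurableSet_Ioi

lemma int_ind_bound (j : ℤ) (m : ℕ) (hm : m < 2 ^ j.toNat) (z : ℝ) :
    |∫ x in Set.Icc (0:ℝ) 1, (if z < x then (1:ℝ) else 0) * haar1 j m x| ≤ 1 / 2 ^ j.toNat := by
  apply int_bound j m hm
  intro x _
  split_ifs <;> norm_num

lemma int_ind_zero (j : ℤ) (m : ℕ) (hm : m < 2 ^ j.toNat) (z : ℝ) (hz : 0 ≤ z) (hz1 : z < 1)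
    (h : z ∉ dyadicI j m) :
    ∫ x in Set.Icc (0:ℝ) 1, (if z < x then (1:ℝ) else 0) * haar1 j m x = 0 := by
  by_cases hj : j = -1
  · subst hj
    have : m = 0 := by simpa using hm
    subst this
    exact absurd (by simp [dyadicI, hz, hz1]) h
  by_cases hc : z < (m:ℝ)/2^j.toNat
  · have e : ∀ x, (if z < x then (1:ℝ) else 0) * haar1 j m x = 1 * haar1 j m x := by
      intro x
      split_ifs with hx
      · rfl
      · have := haar1_abs_le j m hm x
        rw [Set.indicator_of_notMem] at this
        · rw [abs_nonpos_iff.mp this]; simp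
        · intro hx'; exact hx (hc.trans_le hx'.1)
    simp_rw [e]
    rw [int_split j hj m hm (fun _ => (1:ℝ)) (integrable_const _)]
    simp only [intervalIntegral.integral_const, smul_eq_mul]
    ring
  · have hz2 : ((m:ℝ)+1)/2^j.toNat ≤ z := by
      by_contra hh; exact h ⟨not_lt.mp hc, not_le.mp hh⟩
    have e : ∀ x, (if z < x then (1:ℝ) else 0) * haar1 j m x = 0 := by
      intro x
      split_ifs with hx
      · have := haar1_abs_le j m hm x
        rw [Set.indicator_of_notMem] at this
        · rw [abs_nonpos_iff.mp this]; simp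
        · intro hx'; exact absurd hx'.2 (by push Not; linarith)
      · simp
    simp_rw [e]; simp

lemma mul_haar_integrable (j : ℤ) (m : ℕ) (hm : m < 2 ^ j.toNat) (g : ℝ → ℝ)
    (hg : IntegrableOn g (Set.Icc 0 1)) :
    Integrable (fun x => g x * haar1 j m x) (volume.restrict (Set.Icc (0:ℝ) 1)) := by
  refine Integrable.mul_bdd (c := 1) hg (haar1_meas j m).aestronglyMeasurable ?_
  exact Filter.Eventually.of_forall fun x => haar1_abs_le_one j m hm x

lemma restrict_cube (d : ℕ) : (volume.restrict (unitCube d) : Measure (Fin d → ℝ)) =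
    Measure.pi (fun _ => (volume : Measure ℝ).restrict (Set.Icc 0 1)) := by
  unfold unitCube
  rw [volume_pi, Measure.restrict_pi_pi]

lemma coeff_formula (d : ℕ) (S : ℕ → Fin d → ℝ) (N : ℕ) (j : Fin d → ℤ) (m : Fin d → ℕ)
    (hm : ∀ i, m i < 2 ^ (j i).toNat) :
    haarCoeff d (discSeq d S N) j m =
      (∑ k ∈ Finset.range N, ∏ i, ∫ x in Set.Icc (0:ℝ) 1,
        (if S k i < x then (1:ℝ) else 0) * haar1 (j i) (m i) x) / N -
      ∏ i, ∫ x in Set.Icc (0:ℝ) 1, x * haar1 (j i) (m i) x := by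
  classical
  unfold haarCoeff
  have e : ∀ x, discSeq d S N x * haarFn d j m x =
      (∑ k ∈ Finset.range N, ∏ i, ((if S k i < x i then (1:ℝ) else 0) * haar1 (j i) (m i) (x i))) / N -
      ∏ i, (x i * haar1 (j i) (m i) (x i)) := by
    intro x
    unfold discSeq haarFn
    simp only [Finset.prod_mul_distrib]
    rw [← Finset.sum_mul, sub_mul, div_mul_eq_mul_div]
    congr 3
    rw [Nat.card_eq_fintype_card, Fintype.card_subtype, Finset.card_filter, Finset.sum_range]
    push_cast
    apply Finset.sum_congr rfl
    intro k _
    by_cases h : ∀ i, S k i < x i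
    · simp [h]
    · rw [if_neg h]
      push Not at h
      obtain ⟨i, hi⟩ := h
      exact (Finset.prod_eq_zero (Finset.mem_univ i) (if_neg (not_lt.mpr hi))).symm
  simp_rw [e]
  rw [restrict_cube]
  have i1 : ∀ k, Integrable (fun x : Fin d → ℝ =>
      ∏ i, ((if S k i < x i then (1:ℝ) else 0) * haar1 (j i) (m i) (x i)))
      (Measure.pi (fun _ => (volume : Measure ℝ).restrict (Set.Icc 0 1))) := fun k =>
    Integrable.fintype_prod
      (f := fun i y => ((if S k i < y then (1:ℝ) else 0) * haar1 (j i) (m i) y))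
      fun i => mul_haar_integrable _ _ (hm i) _ (ind_integrable _)
  have i2 : Integrable (fun x : Fin d → ℝ => ∏ i, (x i * haar1 (j i) (m i) (x i)))
      (Measure.pi (fun _ => (volume : Measure ℝ).restrict (Set.Icc 0 1))) :=
    Integrable.fintype_prod (f := fun i y => (y * haar1 (j i) (m i) y))
      fun i => mul_haar_integrable _ _ (hm i) (fun y => y) continuous_id.integrableOn_Icc
  rw [integral_sub ((integrable_finsetSum _ fun k _ => i1 k).div_const _) i2, integral_div,
    integral_finsetSum _ fun k _ => i1 k]
  congr 1
  · congr 1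
    apply Finset.sum_congr rfl
    intro k _
    exact integral_fintype_prod_eq_prod
      (f := fun i y => ((if S k i < y then (1:ℝ) else 0) * haar1 (j i) (m i) y)) ..
  · exact integral_fintype_prod_eq_prod (f := fun i y => (y * haar1 (j i) (m i) y)) ..

lemma prod_pow_bound (d : ℕ) (j : Fin d → ℤ) (f : Fin d → ℝ) (a : ℕ)
    (h : ∀ i, |f i| ≤ 1 / 2 ^ (a * (j i).toNat)) : |∏ i, f i| ≤ 1 / 2 ^ (a * jnorm d j) := by
  rw [Finset.abs_prod]
  refine (Finset.prod_le_prod (fun i _ => abs_nonneg _) (fun i _ => h i)).trans ?_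
  rw [Finset.prod_div_distrib, Finset.prod_pow_eq_pow_sum, ← Finset.mul_sum]
  simp [jnorm]

end analysis



/-- Haar coefficient bounds for small dyadic intervals
(`|j| + t/2 ≥ log₂ N`) of an order `2` digital `(t,d)`-sequence with triangular generating
matrices: (a) if `I_{j,m}` contains points of the first `N` points,
`|⟨D^N,h_{j,m}⟩| ≤ C 2^{t/2} N⁻¹ 2^{-|j|}`; (b) at least `2^{|j|} - N` boxes `I_{j,m}`
contain no such point, and for those `|⟨D^N,h_{j,m}⟩| ≤ C 2^{-2|j|}`. -/
theorem haar_coeff_small_intervals (d : ℕ) (hd : 0 < d) :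
    ∃ C : ℝ, 0 < C ∧ ∀ (t : ℕ) (E : Fin d → ℕ → ℕ → ZMod 2),
      IsOrderSeq 2 t d E → Triangular2 d E →
      ∀ (N : ℕ), 2 ≤ N → ∀ (j : Fin d → ℤ), (∀ i, -1 ≤ j i) →
        Real.logb 2 N ≤ (jnorm d j : ℝ) + (t:ℝ)/2 →
        (∀ m : Fin d → ℕ, (∀ i, m i < 2 ^ (j i).toNat) →
          (∃ k < N, digitalSeq d E k ∈ dyadicBox d j m) →
          |haarCoeff d (discSeq d (digitalSeq d E) N) j m| ≤
            C * (2:ℝ) ^ ((t:ℝ)/2) / N / 2 ^ (jnorm d j)) ∧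
        ((2 ^ (jnorm d j) : ℤ) - N ≤
          (Nat.card {m : Fin d → ℕ // (∀ i, m i < 2 ^ (j i).toNat) ∧
            ∀ k < N, digitalSeq d E k ∉ dyadicBox d j m} : ℤ)) ∧
        (∀ m : Fin d → ℕ, (∀ i, m i < 2 ^ (j i).toNat) →
          (∀ k < N, digitalSeq d E k ∉ dyadicBox d j m) →
          |haarCoeff d (discSeq d (digitalSeq d E) N) j m| ≤
            C / 2 ^ (2 * jnorm d j)) := by
  refine ⟨4, by norm_num, ?_⟩
  intro t E hE hT N hN j hj hlog
  classical
  have hN0 : (0:ℝ) < N := by positivity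
  have hz0 : ∀ k i, 0 ≤ digitalSeq d E k i := fun k i => binT_nonneg _
  have hz1 : ∀ k i, digitalSeq d E k i < 1 := fun k i => binT_lt_one _ (okDig_dig _ (hT i) k)
  have hNle : (N:ℝ) ≤ 2 ^ (jnorm d j) * (2:ℝ) ^ ((t:ℝ)/2) := by
    rw [Real.logb_le_iff_le_rpow (by norm_num) hN0, Real.rpow_add (by norm_num),
      Real.rpow_natCast] at hlog
    exact hlog
  have hv : ∀ m : Fin d → ℕ, (∀ i, m i < 2 ^ (j i).toNat) →
      |∏ i, ∫ x in Set.Icc (0:ℝ) 1, x * haar1 (j i) (m i) x| ≤ 1 / 2 ^ (2 * jnorm d j) := by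
    intro m hm
    exact prod_pow_bound d j _ 2 fun i => int_id _ _ (hm i)
  have hzero : ∀ m : Fin d → ℕ, (∀ i, m i < 2 ^ (j i).toNat) → ∀ k,
      digitalSeq d E k ∉ dyadicBox d j m → ∏ i, ∫ x in Set.Icc (0:ℝ) 1,
        (if digitalSeq d E k i < x then (1:ℝ) else 0) * haar1 (j i) (m i) x = 0 := by
    intro m hm k hk
    simp only [dyadicBox, Set.mem_univ_pi, not_forall] at hk
    obtain ⟨i, hi⟩ := hk
    exact Finset.prod_eq_zero (Finset.mem_univ i) (int_ind_zero _ _ (hm i) _ (hz0 k i) (hz1 k i) hi)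
  refine ⟨?_, ?_, ?_⟩
  · intro m hm _
    rw [coeff_formula d _ N j m hm]
    set s := (Finset.range N).filter (fun k => digitalSeq d E k ∈ dyadicBox d j m) with hs
    have hcard : s.card ≤ 2 ^ (t/2+1) := by
      apply count_box d t E hE hT j m s
      intro k hk
      rw [hs, Finset.mem_filter, Finset.mem_range] at hk
      refine ⟨?_, hk.2⟩
      have h1 : (k:ℝ) < N := by exact_mod_cast hk.1
      have h2 : (2:ℝ) ^ ((t:ℝ)/2) ≤ 2 ^ (t/2+1) := by
        rw [← Real.rpow_natCast]
        apply Real.rpow_le_rpow_of_exponent_le (by norm_num)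
        have : t ≤ 2 * (t/2+1) := by omega
        have : (t:ℝ) ≤ 2 * ((t/2+1 : ℕ) : ℝ) := by exact_mod_cast this
        linarith
      have h3 : (k:ℝ) < 2 ^ (jnorm d j + t/2+1) := by
        rw [add_assoc, pow_add]
        refine h1.trans_le (hNle.trans ?_)
        gcongr
      exact_mod_cast h3
    have hcard' : (s.card : ℝ) ≤ 2 * (2:ℝ) ^ ((t:ℝ)/2) := by
      have h1 : (s.card : ℝ) ≤ 2 ^ (t/2+1) := by exact_mod_cast hcard
      refine h1.trans ?_
      rw [pow_succ, mul_comm, ← Real.rpow_natCast]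
      gcongr
      · norm_num
      · have : 2 * (t/2) ≤ t := by omega
        have : 2 * ((t/2 : ℕ) : ℝ) ≤ t := by exact_mod_cast this
        linarith
    have hsum : |∑ k ∈ Finset.range N, ∏ i, ∫ x in Set.Icc (0:ℝ) 1,
        (if digitalSeq d E k i < x then (1:ℝ) else 0) * haar1 (j i) (m i) x| ≤
        2 * (2:ℝ) ^ ((t:ℝ)/2) * (1 / 2 ^ jnorm d j) := by
      have h1 : ∑ k ∈ s, ∏ i, ∫ x in Set.Icc (0:ℝ) 1,
          (if digitalSeq d E k i < x then (1:ℝ) else 0) * haar1 (j i) (m i) x =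
          ∑ k ∈ Finset.range N, ∏ i, ∫ x in Set.Icc (0:ℝ) 1,
          (if digitalSeq d E k i < x then (1:ℝ) else 0) * haar1 (j i) (m i) x := by
        apply Finset.sum_subset (Finset.filter_subset _ _)
        intro k hk hk'
        apply hzero m hm k
        intro hh
        exact hk' (Finset.mem_filter.mpr ⟨hk, hh⟩)
      rw [← h1]
      refine (Finset.abs_sum_le_sum_abs _ _).trans ?_
      refine (Finset.sum_le_card_nsmul _ _ (1 / 2 ^ jnorm d j) ?_).trans ?_
      · intro k _
        have := prod_pow_bound d j (fun i => ∫ x in Set.Icc (0:ℝ) 1,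
          (if digitalSeq d E k i < x then (1:ℝ) else 0) * haar1 (j i) (m i) x) 1
          (fun i => by rw [one_mul]; exact int_ind_bound _ _ (hm i) _)
        rwa [one_mul] at this
      · rw [nsmul_eq_mul]
        gcongr
    have hv' : (1:ℝ) / 2 ^ (2 * jnorm d j) ≤ (2:ℝ) ^ ((t:ℝ)/2) / N / 2 ^ (jnorm d j) := by
      rw [two_mul, pow_add, ← div_div]
      apply div_le_div_of_nonneg_right _ (by positivity)
      rw [div_le_div_iff₀ (by positivity) hN0]
      linarith
    refine (abs_sub _ _).trans ?_
    rw [abs_div, abs_of_pos hN0]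
    have h4 := div_le_div_of_nonneg_right hsum hN0.le
    have h5 := (hv m hm).trans hv'
    have h6 : 0 ≤ (2:ℝ) ^ ((t:ℝ)/2) / N / 2 ^ (jnorm d j) := by positivity
    have e1 : 2 * (2:ℝ) ^ ((t:ℝ)/2) * (1 / 2 ^ jnorm d j) / N =
      2 * ((2:ℝ) ^ ((t:ℝ)/2) / N / 2 ^ (jnorm d j)) := by ring
    have e2 : 4 * (2:ℝ) ^ ((t:ℝ)/2) / N / 2 ^ (jnorm d j) =
      4 * ((2:ℝ) ^ ((t:ℝ)/2) / N / 2 ^ (jnorm d j)) := by ring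
    rw [e1] at h4
    rw [e2]
    linarith
  · have hD : (Dfin d j).card = 2 ^ jnorm d j := by
      simp [Dfin, jnorm, Finset.prod_pow_eq_pow_sum]
    have hcnt : Nat.card {m : Fin d → ℕ // (∀ i, m i < 2 ^ (j i).toNat) ∧
        ∀ k < N, digitalSeq d E k ∉ dyadicBox d j m} =
        ((Dfin d j).filter (fun m => ∀ k < N, digitalSeq d E k ∉ dyadicBox d j m)).card := by
      rw [← Nat.card_eq_finsetCard]
      apply Nat.card_congr
      apply Equiv.subtypeEquivRight
      intro m
      simp [Dfin]
    have hsplit := Finset.card_filter_add_card_filter_not (s := Dfin d j)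
      (fun m => ∀ k < N, digitalSeq d E k ∉ dyadicBox d j m)
    have hne : ((Dfin d j).filter
        (fun m => ¬ ∀ k < N, digitalSeq d E k ∉ dyadicBox d j m)).card ≤ N := by
      calc _ ≤ ((Finset.range N).image
            (fun k i => ⌊digitalSeq d E k i * 2 ^ (j i).toNat⌋₊)).card := by
            apply Finset.card_le_card
            intro m hm
            rw [Finset.mem_filter] at hm
            obtain ⟨_, hm⟩ := hm
            push Not at hm
            obtain ⟨k, hk, hk'⟩ := hm
            rw [Finset.mem_image]
            refine ⟨k, Finset.mem_range.mpr hk, ?_⟩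
            funext i
            have := mem_dyadicI.mp (hk' i (Set.mem_univ _))
            rw [Nat.floor_eq_iff (mul_nonneg (hz0 k i) (by positivity))]
            exact this
        _ ≤ _ := Finset.card_image_le.trans (by simp)
    rw [hcnt]
    rw [hD] at hsplit
    have : (2:ℤ) ^ jnorm d j = ((2 ^ jnorm d j : ℕ) : ℤ) := by push_cast; rfl
    rw [this]
    omega
  · intro m hm hk
    rw [coeff_formula d _ N j m hm, Finset.sum_eq_zero]
    · rw [zero_div, zero_sub, abs_neg]
      refine (hv m hm).trans ?_
      gcongr
      norm_num
    · intro k hk'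
      exact hzero m hm k (hk k (Finset.mem_range.mp hk'))

end
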